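/- Let D ⊆ ℂ be open and connected, let f : ℂ → ℂ be holomorphic and nowhere-vanishing on D, and let γ : [a, b] → D (a < b) be a piecewise continuously differentiable closed curve, i.e. γ(a) = γ(b). Let f* : D → ℂ be the multiplicative derivative f*(z) = exp(f'(z)/f(z)). Then every branch value of the complex multiplicative integral of f* along γ equals 1; that is, MInt(f*, γ) = {1}, so the multiplicative integral ∮_C (f*)^{dz} is single-valued and equal to 1. -/

import Mathlib

open Complex

/-- A curve `γ` is piecewise continuously differentiable on `[a, b]` if it is continuous
there and `[a, b]` splits into finitely many subintervals on each of which `γ` is `C¹`. -/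
def PiecewiseC1On (γ : ℝ → ℂ) (a b : ℝ) : Prop :=
  ContinuousOn γ (Set.Icc a b) ∧
  ∃ (m : ℕ) (t : ℕ → ℝ), 0 < m ∧ t 0 = a ∧ t m = b ∧
    (∀ k < m, t k < t (k + 1)) ∧
    ∀ k < m, ContDiffOn ℝ 1 γ (Set.Icc (t k) (t (k + 1)))

/-- `h` is a continuous logarithm of `f` along the curve `γ` on `[a, b]`. -/
def IsContinuousLog (f : ℂ → ℂ) (γ : ℝ → ℂ) (a b : ℝ) (h : ℝ → ℂ) : Prop :=
  ContinuousOn h (Set.Icc a b) ∧ ∀ t ∈ Set.Icc a b, Complex.exp (h t) = f (γ t)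

/-- The set of branch values of the complex multiplicative integral of `f` along `γ`. -/
def MInt (f : ℂ → ℂ) (γ : ℝ → ℂ) (a b : ℝ) : Set ℂ :=
  {w | ∃ h : ℝ → ℂ, IsContinuousLog f γ a b h ∧
    w = Complex.exp (∫ t in a..b, h t * deriv γ t)}

/-!
Writing `f* = exp ∘ logDeriv f`, the function `logDeriv f ∘ γ` is one continuous logarithm of `f*`
along `γ`, and any other one differs from it by a constant `c = 2πin`. As `logDeriv f + c` is the
logarithmic derivative of `F z = f z * exp (c * z)`, the curve `F ∘ γ` solves the linear equation
`y' = (h * γ') * y` with `h = logDeriv f ∘ γ + c`, so that `exp (∫ h * γ') = F (γ b) / F (γ a)`.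
On a closed curve this quotient is `1`, whatever the branch `n`.
-/

open MeasureTheory Set
open scoped Interval Real

theorem exists_int_eqOn_add_of_exp_eqOn {X : Type*} [TopologicalSpace X] {S : Set X}
    (hS : IsPreconnected S) {h₁ h₂ : X → ℂ} (hc₁ : ContinuousOn h₁ S) (hc₂ : ContinuousOn h₂ S)
    (hexp : EqOn (fun x => exp (h₁ x)) (fun x => exp (h₂ x)) S) :
    ∃ n : ℤ, EqOn h₁ (fun x => h₂ x + n * (2 * π * I)) S := by
  obtain rfl | ⟨x₀, hx₀⟩ := S.eq_empty_or_nonempty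
  · exact ⟨0, eqOn_empty _ _⟩
  obtain ⟨n, hn⟩ := exp_eq_exp_iff_exists_int.1 (hexp hx₀)
  refine ⟨n, isCoveringMap_exp.eqOn_of_comp_eqOn hS hc₁ (hc₂.add continuousOn_const)
    (fun x hx => Subtype.ext ?_) hx₀ hn⟩
  exact (hexp hx).trans (exp_periodic.int_mul n (h₂ x)).symm

theorem eq_exp_integral_smul_of_hasDerivAt_off_countable {E : Type*} [NormedAddCommGroup E]
    [NormedSpace ℂ E] [CompleteSpace E] {a b : ℝ} {φ : ℝ → ℂ} {y : ℝ → E} {s : Set ℝ}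
    (hs : s.Countable) (hφ : IntervalIntegrable φ volume a b)
    (hφc : ∀ t ∈ Ioo (min a b) (max a b) \ s, ContinuousAt φ t) (hy : ContinuousOn y [[a, b]])
    (hy' : ∀ t ∈ Ioo (min a b) (max a b) \ s, HasDerivAt y (φ t • y t) t) :
    y b = exp (∫ t in a..b, φ t) • y a := by
  set Φ : ℝ → ℂ := fun x => ∫ t in a..x, φ t
  have hΦ : ContinuousOn Φ [[a, b]] :=
    intervalIntegral.continuousOn_primitive_interval' hφ left_mem_uIcc
  have hΦ' : ∀ x ∈ Ioo (min a b) (max a b) \ s, HasDerivAt Φ (φ x) x := fun x hx =>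
    intervalIntegral.integral_hasDerivAt_right
      (hφ.mono_set (uIcc_subset_uIcc_left (Ioo_subset_Icc_self hx.1)))
      ⟨Ι a b, Ioc_mem_nhds hx.1.1 hx.1.2, hφ.aestronglyMeasurable_restrict_uIoc⟩ (hφc x hx)
  have hconst : exp (-Φ b) • y b = exp (-Φ a) • y a := by
    have hderiv : ∀ x ∈ Ioo (min a b) (max a b) \ s,
        HasDerivAt (fun x => exp (-Φ x) • y x) 0 x := fun x hx => by
      convert (hΦ' x hx).fun_neg.cexp.fun_smul (hy' x hx) using 1
      module
    have hint := integral_eq_of_hasDerivAt_off_countable (fun x => exp (-Φ x) • y x) 0 hs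
      (hΦ.neg.cexp.smul hy) hderiv intervalIntegrable_const
    exact sub_eq_zero.1 (hint.symm.trans (by simp))
  have hΦa : Φ a = 0 := intervalIntegral.integral_same
  calc y b = exp (Φ b) • exp (-Φ b) • y b := by rw [smul_smul, ← exp_add]; simp
    _ = exp (Φ b) • y a := by rw [hconst, hΦa]; simp

theorem intervalIntegrable_deriv_of_contDiffOn_Icc {E : Type*} [NormedAddCommGroup E]
    [NormedSpace ℝ E] {γ : ℝ → E} {a b : ℝ} (hab : a ≤ b) (hγ : ContDiffOn ℝ 1 γ (Icc a b)) :
    IntervalIntegrable (deriv γ) volume a b := by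
  obtain rfl | hlt := hab.eq_or_lt
  · exact .refl
  have hcont : ContinuousOn (derivWithin γ (Icc a b)) (Icc a b) :=
    hγ.continuousOn_derivWithin (uniqueDiffOn_Icc hlt) le_rfl
  refine (hcont.intervalIntegrable_of_Icc hab).congr_uIoo fun t ht => ?_
  rw [uIoo_of_le hab] at ht
  exact derivWithin_of_mem_nhds (Icc_mem_nhds ht.1 ht.2)

theorem exists_mem_Ioc_succ {α : Type*} [LinearOrder α] {t : ℕ → α} {x : α} {m : ℕ}
    (h₀ : t 0 < x) (hm : x ≤ t m) : ∃ k < m, x ∈ Ioc (t k) (t (k + 1)) := by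
  induction m with
  | zero => exact absurd hm h₀.not_ge
  | succ m ih =>
    obtain hx | hx := le_or_gt x (t m)
    · obtain ⟨k, hk, hxk⟩ := ih hx
      exact ⟨k, hk.trans m.lt_succ_self, hxk⟩
    · exact ⟨m, m.lt_succ_self, hx, hm⟩

namespace PiecewiseC1On

variable {γ : ℝ → ℂ} {a b : ℝ}

theorem lt (hγ : PiecewiseC1On γ a b) : a < b := by
  obtain ⟨-, m, t, hm, rfl, rfl, ht, -⟩ := hγ
  exact strictMonoOn_Iic_of_lt_succ ht (zero_le (a := m)) (le_refl m) hm

theorem exists_countable_contDiffAt (hγ : PiecewiseC1On γ a b) :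
    ∃ s : Set ℝ, s.Countable ∧ ∀ x ∈ Ioo a b \ s, ContDiffAt ℝ 1 γ x := by
  obtain ⟨-, m, t, -, rfl, rfl, -, hC⟩ := hγ
  refine ⟨range t, countable_range t, fun x ⟨hx, hxt⟩ => ?_⟩
  obtain ⟨k, hk, hkx, hxk⟩ := exists_mem_Ioc_succ hx.1 hx.2.le
  have hxk_ne : x ≠ t (k + 1) := fun h => hxt ⟨k + 1, h.symm⟩
  exact (hC k hk).contDiffAt (Icc_mem_nhds hkx (hxk.lt_of_ne hxk_ne))

theorem intervalIntegrable_deriv (hγ : PiecewiseC1On γ a b) :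
    IntervalIntegrable (deriv γ) volume a b := by
  obtain ⟨-, m, t, -, rfl, rfl, ht, hC⟩ := hγ
  exact .trans_iterate fun k hk => intervalIntegrable_deriv_of_contDiffOn_Icc (ht k hk).le (hC k hk)

end PiecewiseC1On

theorem continuousOn_logDeriv_comp {𝕜 X : Type*} [NontriviallyNormedField 𝕜] [CompleteSpace 𝕜]
    [TopologicalSpace X] {S : Set X} {f : 𝕜 → 𝕜} {p : X → 𝕜} (hp : ContinuousOn p S)
    (hf : ∀ x ∈ S, AnalyticAt 𝕜 f (p x)) (hne : ∀ x ∈ S, f (p x) ≠ 0) :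
    ContinuousOn (fun x => logDeriv f (p x)) S := fun x hx =>
  ((hf x hx).deriv.continuousAt.div (hf x hx).continuousAt (hne x hx)).comp_continuousWithinAt
    (hp x hx)

section AlongCurve

variable {f : ℂ → ℂ} {γ : ℝ → ℂ} {a b : ℝ}

theorem exp_integral_logDeriv_mul_deriv (hγ : PiecewiseC1On γ a b)
    (hf : ∀ t ∈ Icc a b, AnalyticAt ℂ f (γ t)) (hne : ∀ t ∈ Icc a b, f (γ t) ≠ 0) :
    exp (∫ t in a..b, logDeriv f (γ t) * deriv γ t) = f (γ b) / f (γ a) := by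
  obtain ⟨s, hs, hγs⟩ := hγ.exists_countable_contDiffAt
  have hab := hγ.lt.le
  have hL := continuousOn_logDeriv_comp hγ.1 hf hne
  have hfγ : ContinuousOn (fun t => f (γ t)) (Icc a b) := fun t ht =>
    (hf t ht).continuousAt.comp_continuousWithinAt (hγ.1 t ht)
  have hφ : IntervalIntegrable (fun t => logDeriv f (γ t) * deriv γ t) volume a b :=
    hγ.intervalIntegrable_deriv.continuousOn_mul (by rwa [uIcc_of_le hab])
  have hsol := eq_exp_integral_smul_of_hasDerivAt_off_countable (y := fun t => f (γ t)) hs hφ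
  simp only [min_eq_left hab, max_eq_right hab, uIcc_of_le hab] at hsol
  rw [eq_div_iff (hne a (left_mem_Icc.2 hab))]
  refine (hsol (fun t ht => ?_) hfγ fun t ht => ?_).symm
  · exact (hL.continuousAt (Icc_mem_nhds ht.1.1 ht.1.2)).mul
      ((hγs t ht).derivWithin (zero_add 1).le).continuousAt
  · have htI := Ioo_subset_Icc_self ht.1
    have hγ' := ((hγs t ht).differentiableAt one_ne_zero).hasDerivAt
    refine ((hf t htI).differentiableAt.hasDerivAt.comp t hγ').congr_deriv ?_
    have := hne t htI
    rw [logDeriv_apply, smul_eq_mul]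
    field_simp

theorem exp_integral_logDeriv_add_const_mul_deriv (hγ : PiecewiseC1On γ a b)
    (hf : ∀ t ∈ Icc a b, AnalyticAt ℂ f (γ t)) (hne : ∀ t ∈ Icc a b, f (γ t) ≠ 0) (c : ℂ) :
    exp (∫ t in a..b, (logDeriv f (γ t) + c) * deriv γ t) =
      f (γ b) / f (γ a) * exp (c * (γ b - γ a)) := by
  have hlog : ∀ t ∈ Icc a b,
      logDeriv (fun z => f z * exp (c * z)) (γ t) = logDeriv f (γ t) + c := fun t ht => by
    rw [logDeriv_mul (g := fun z => exp (c * z)) _ (hne t ht) (exp_ne_zero _)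
      (hf t ht).differentiableAt (by fun_prop)]
    simp [logDeriv_apply, deriv_cexp (differentiableAt_fun_id.const_mul c)]
  calc exp (∫ t in a..b, (logDeriv f (γ t) + c) * deriv γ t)
    _ = exp (∫ t in a..b, logDeriv (fun z => f z * exp (c * z)) (γ t) * deriv γ t) := by
      congr 1
      refine intervalIntegral.integral_congr fun t ht => ?_
      simp only [hlog t (uIcc_of_le hγ.lt.le ▸ ht)]
    _ = f (γ b) * exp (c * γ b) / (f (γ a) * exp (c * γ a)) :=
      exp_integral_logDeriv_mul_deriv hγ (fun t ht => (hf t ht).fun_mul (by fun_prop))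
        fun t ht => mul_ne_zero (hne t ht) (exp_ne_zero _)
    _ = f (γ b) / f (γ a) * exp (c * (γ b - γ a)) := by
      rw [mul_div_mul_comm, ← exp_sub, mul_sub]

end AlongCurve

namespace IsContinuousLog

variable {g : ℂ → ℂ} {γ h₀ h : ℝ → ℂ} {a b : ℝ}

theorem iff_exists_int (h₀_log : IsContinuousLog g γ a b h₀) :
    IsContinuousLog g γ a b h ↔
      ∃ n : ℤ, EqOn h (fun t => h₀ t + n * (2 * π * I)) (Icc a b) := by
  constructor
  · rintro ⟨hc, hexp⟩
    exact exists_int_eqOn_add_of_exp_eqOn isPreconnected_Icc hc h₀_log.1 fun t ht =>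
      (hexp t ht).trans (h₀_log.2 t ht).symm
  · rintro ⟨n, hn⟩
    refine ⟨(h₀_log.1.add continuousOn_const).congr hn, fun t ht => ?_⟩
    rw [hn ht, exp_periodic.int_mul n, h₀_log.2 t ht]

theorem mInt_eq_range (h₀_log : IsContinuousLog g γ a b h₀) (hab : a ≤ b) :
    MInt g γ a b =
      range fun n : ℤ => exp (∫ t in a..b, (h₀ t + n * (2 * π * I)) * deriv γ t) := by
  ext w
  constructor
  · rintro ⟨h, hlog, rfl⟩
    obtain ⟨n, hn⟩ := h₀_log.iff_exists_int.1 hlog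
    refine ⟨n, congrArg exp (intervalIntegral.integral_congr fun t ht => ?_)⟩
    simp only [hn (uIcc_of_le hab ▸ ht)]
  · rintro ⟨n, rfl⟩
    exact ⟨_, h₀_log.iff_exists_int.2 ⟨n, fun _ _ => rfl⟩, rfl⟩

end IsContinuousLog

theorem multiplicative_integral_closed_curve_eq_one_general {f : ℂ → ℂ} {γ : ℝ → ℂ} {a b : ℝ}
    (hγ : PiecewiseC1On γ a b) (hf : ∀ t ∈ Icc a b, AnalyticAt ℂ f (γ t))
    (hne : ∀ t ∈ Icc a b, f (γ t) ≠ 0) :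
    MInt (fun z => exp (deriv f z / f z)) γ a b =
      range fun n : ℤ => f (γ b) / f (γ a) * exp (n * (2 * π * I) * (γ b - γ a)) := by
  have hlog : IsContinuousLog (fun z => exp (deriv f z / f z)) γ a b
      (fun t => logDeriv f (γ t)) :=
    ⟨continuousOn_logDeriv_comp hγ.1 hf hne, fun _ _ => rfl⟩
  simp only [hlog.mInt_eq_range hγ.lt.le, exp_integral_logDeriv_add_const_mul_deriv hγ hf hne]

/-- Corollary 1: for `f` holomorphic and nowhere-vanishing on the open connected set `D`
and a piecewise `C¹` closed curve `γ` in `D`, every branch value of the complex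
multiplicative integral of the multiplicative derivative `f* = exp (f'/f)` along `γ`
equals `1`: `∮_C (f*)^{dz} = 1` single-valuedly, i.e. `MInt (f*, γ) = {1}`. -/
theorem multiplicative_integral_closed_curve_eq_one
    (D : Set ℂ) (hD : IsOpen D) (hDconn : IsConnected D)
    (f : ℂ → ℂ) (hf : DifferentiableOn ℂ f D) (hne : ∀ z ∈ D, f z ≠ 0)
    (a b : ℝ) (hab : a < b)
    (γ : ℝ → ℂ) (hγ : PiecewiseC1On γ a b) (hγD : ∀ t ∈ Set.Icc a b, γ t ∈ D)
    (hclosed : γ a = γ b) :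
    MInt (fun z => Complex.exp (deriv f z / f z)) γ a b = {1} := by
  rw [multiplicative_integral_closed_curve_eq_one_general hγ
    (fun t ht => hf.analyticAt (hD.mem_nhds (hγD t ht))) fun t ht => hne _ (hγD t ht)]
  simp [hclosed, hne _ (hγD b (right_mem_Icc.2 hab.le))]
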